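/- Let X be a compact metric space, Λ a compact metric space, w : Λ × X → X a weakly hyperbolic IFS, and p a Borel probability measure on Λ. Then for every a ∈ X the sequence of measures T_pⁿ(δ_a) converges in the weak* topology to a Borel probability measure ν on X, and ν is invariant for w, i.e. T_p(ν) = ν. -/

import Mathlib

open Metric Set Filter Topology MeasureTheory

/-- `seqComp w σ n = w_{σ₁} ∘ ⋯ ∘ w_{σₙ}` (with `σ i` denoting `σ_{i+1}`). -/
def seqComp {Λ X : Type*} (w : Λ → X → X) (σ : ℕ → Λ) : ℕ → X → X
  | 0 => id
  | n + 1 => seqComp w σ n ∘ w (σ n)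

section helpers

variable {Λ X : Type*} [MetricSpace Λ] [CompactSpace Λ]
    [MeasurableSpace Λ] [BorelSpace Λ]
    [MetricSpace X] [CompactSpace X] [MeasurableSpace X] [BorelSpace X]

lemma seqComp_congr_aux {Λ X : Type*} (w : Λ → X → X) (σ τ : ℕ → Λ) (n : ℕ)
    (h : ∀ i < n, σ i = τ i) : seqComp w σ n = seqComp w τ n := by
  induction n with
  | zero => rfl
  | succ n ih =>
    simp only [seqComp]
    rw [ih (fun i hi => h i (by omega)), h n (by omega)]

lemma seqComp_cont_aux {Λ X : Type*} [TopologicalSpace Λ] [TopologicalSpace X]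
    (w : Λ → X → X) (hw : Continuous fun p : Λ × X => w p.1 p.2) (n : ℕ) :
    Continuous fun q : (ℕ → Λ) × X => seqComp w q.1 n q.2 := by
  induction n with
  | zero => exact continuous_snd
  | succ n ih =>
    simp only [seqComp, Function.comp]
    have h1 : Continuous fun q : (ℕ → Λ) × X => (q.1, w (q.1 n) q.2) := by
      refine continuous_fst.prodMk ?_
      have h0 : Continuous fun q : (ℕ → Λ) × X => (q.1 n, q.2) :=
        ((continuous_apply n).comp continuous_fst).prodMk continuous_snd
      exact hw.comp h0
    exact ih.comp h1

lemma unif_aux {Λ X : Type*} [MetricSpace Λ] [CompactSpace Λ] [MetricSpace X] [CompactSpace X]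
    (w : Λ → X → X) (hw : Continuous fun p : Λ × X => w p.1 p.2)
    (hyp : ∀ σ : ℕ → Λ,
      Tendsto (fun n => diam (Set.range (seqComp w σ n))) atTop (𝓝 0))
    {ε : ℝ} (hε : 0 < ε) :
    ∃ N, ∀ σ x y, dist (seqComp w σ N x) (seqComp w σ N y) < ε := by
  by_contra! hcon
  let K : ℕ → Set ((ℕ → Λ) × X × X) := fun n =>
    {q | ε ≤ dist (seqComp w q.1 n q.2.1) (seqComp w q.1 n q.2.2)}
  let t : ℕ → Set (ℕ → Λ) := fun n => Prod.fst '' K n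
  have hK : ∀ n, IsClosed (K n) := fun n => by
    have hc := seqComp_cont_aux w hw n
    refine isClosed_le continuous_const (Continuous.dist ?_ ?_)
    · exact hc.comp (continuous_fst.prodMk (continuous_fst.comp continuous_snd))
    · exact hc.comp (continuous_fst.prodMk (continuous_snd.comp continuous_snd))
  have ht : ∀ n, IsCompact (t n) := fun n => (hK n).isCompact.image continuous_fst
  have := IsCompact.nonempty_iInter_of_sequence_nonempty_isCompact_isClosed t
    (by
      rintro n _ ⟨⟨σ, x, y⟩, h, rfl⟩
      exact ⟨⟨σ, w (σ n) x, w (σ n) y⟩, h, rfl⟩)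
    (by
      intro n
      obtain ⟨σ, x, y, h⟩ := hcon n
      exact ⟨σ, ⟨σ, x, y⟩, h, rfl⟩)
    (ht 0) (fun n => (ht n).isClosed)
  obtain ⟨σ, hσ⟩ := this
  obtain ⟨n, hn⟩ := ((hyp σ).eventually (gt_mem_nhds hε)).exists
  obtain ⟨⟨τ, x, y⟩, h, rfl⟩ := Set.mem_iInter.1 hσ n
  have hb : Bornology.IsBounded (Set.range (seqComp w τ n)) :=
    isCompact_univ.isBounded.subset (Set.subset_univ _)
  have := Metric.dist_le_diam_of_mem hb (Set.mem_range_self x) (Set.mem_range_self y)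
  have h' : ε ≤ dist (seqComp w τ n x) (seqComp w τ n y) := h
  simp only at hn
  linarith

/-- Dual operator. -/
noncomputable def dualOp (w : Λ → X → X) (p : Measure Λ) (f : X → ℝ) : X → ℝ :=
  fun x => ∫ l, f (w l x) ∂p

lemma int_aux {Y : Type*} [TopologicalSpace Y] [CompactSpace Y] [MeasurableSpace Y]
    [OpensMeasurableSpace Y] (μ : Measure Y) [IsFiniteMeasure μ]
    (f : Y → ℝ) (hf : Continuous f) : Integrable f μ :=
  (BoundedContinuousFunction.mkOfCompact ⟨f, hf⟩).integrable μ

lemma dualOp_cont (w : Λ → X → X) (hw : Continuous fun p : Λ × X => w p.1 p.2)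
    (p : Measure Λ) [IsProbabilityMeasure p] (f : X → ℝ) (hf : Continuous f) :
    Continuous (dualOp w p f) := by
  have h := continuous_parametric_integral_of_continuous (μ := p)
    (f := fun (x : X) (l : Λ) => f (w l x))
    (hf.comp (hw.comp continuous_swap)) (isCompact_univ (X := Λ))
  simp only [Measure.restrict_univ] at h
  exact h

lemma dualOp_iter_cont (w : Λ → X → X) (hw : Continuous fun p : Λ × X => w p.1 p.2)
    (p : Measure Λ) [IsProbabilityMeasure p] (f : X → ℝ) (hf : Continuous f) (n : ℕ) :
    Continuous ((dualOp w p)^[n] f) := by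
  induction n with
  | zero => exact hf
  | succ n ih =>
    rw [Function.iterate_succ_apply']
    exact dualOp_cont w hw p _ ih

lemma dualOp_osc (w : Λ → X → X) (hw : Continuous fun p : Λ × X => w p.1 p.2)
    (p : Measure Λ) [IsProbabilityMeasure p] (f : X → ℝ) (hf : Continuous f) (ε : ℝ) (n : ℕ) :
    ∀ x y, (∀ σ, |f (seqComp w σ n x) - f (seqComp w σ n y)| ≤ ε) →
      |(dualOp w p)^[n] f x - (dualOp w p)^[n] f y| ≤ ε := by
  induction n with
  | zero =>
    intro x y h
    obtain ⟨l⟩ : Nonempty Λ := nonempty_of_isProbabilityMeasure p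
    exact h (fun _ => l)
  | succ n ih =>
    intro x y h
    rw [Function.iterate_succ_apply']
    set g := (dualOp w p)^[n] f with hg
    have hgc : Continuous g := dualOp_iter_cont w hw p f hf n
    have hi : ∀ x, Integrable (fun l => g (w l x)) p := fun x =>
      int_aux p _ (hgc.comp (hw.comp (continuous_id.prodMk continuous_const)))
    simp only [dualOp]
    rw [← integral_sub (hi x) (hi y)]
    have := norm_integral_le_of_norm_le_const (μ := p) (C := ε)
      (f := fun l => g (w l x) - g (w l y)) (Eventually.of_forall fun l => by
        refine ih _ _ fun σ => ?_
        have h1 := h (Function.update σ n l)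
        simp only [seqComp, Function.comp, Function.update_self] at h1
        rwa [seqComp_congr_aux w (Function.update σ n l) σ n
          (fun i hi => Function.update_of_ne hi.ne _ _)] at h1)
    simpa using this

lemma T_integral (w : Λ → X → X) (hw : Continuous fun p : Λ × X => w p.1 p.2)
    (p : Measure Λ) [IsProbabilityMeasure p]
    (T : ProbabilityMeasure X → ProbabilityMeasure X)
    (hT : ∀ (μ : ProbabilityMeasure X) (B : Set X), MeasurableSet B →
      (T μ : Measure X) B = ∫⁻ l, (μ : Measure X) ((fun x => w l x) ⁻¹' B) ∂p)
    (μ : ProbabilityMeasure X) (f : X → ℝ) (hf : Continuous f) :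
    ∫ x, f x ∂(T μ : Measure X) = ∫ x, dualOp w p f x ∂(μ : Measure X) := by
  have hm := hw.measurable
  have h1 : (T μ : Measure X) = (p.prod (μ : Measure X)).map (fun q => w q.1 q.2) := by
    ext B hB
    rw [hT μ B hB, Measure.map_apply hm hB, Measure.prod_apply (hm hB)]
    rfl
  rw [h1, integral_map hm.aemeasurable hf.aestronglyMeasurable,
    integral_prod_symm (fun q : Λ × X => f (w q.1 q.2)) (int_aux _ _ (hf.comp hw))]
  rfl

lemma T_iter_integral (w : Λ → X → X) (hw : Continuous fun p : Λ × X => w p.1 p.2)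
    (p : Measure Λ) [IsProbabilityMeasure p]
    (T : ProbabilityMeasure X → ProbabilityMeasure X)
    (hT : ∀ (μ : ProbabilityMeasure X) (B : Set X), MeasurableSet B →
      (T μ : Measure X) B = ∫⁻ l, (μ : Measure X) ((fun x => w l x) ⁻¹' B) ∂p)
    (n : ℕ) : ∀ (μ : ProbabilityMeasure X) (f : X → ℝ), Continuous f →
    ∫ x, f x ∂(T^[n] μ : Measure X) = ∫ x, (dualOp w p)^[n] f x ∂(μ : Measure X) := by
  induction n with
  | zero => intro μ f hf; rfl
  | succ n ih =>
    intro μ f hf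
    rw [Function.iterate_succ_apply', T_integral w hw p T hT _ f hf,
      ih μ _ (dualOp_cont w hw p f hf), Function.iterate_succ_apply]

lemma osc_integral (g : X → ℝ) (hg : Continuous g) (ε : ℝ) (a : X)
    (h : ∀ x, |g x - g a| ≤ ε) (μ : ProbabilityMeasure X) :
    |∫ x, g x ∂(μ : Measure X) - g a| ≤ ε := by
  have := norm_integral_le_of_norm_le_const (μ := (μ : Measure X)) (C := ε)
      (f := fun x => g x - g a) (Eventually.of_forall h)
  rw [integral_sub (int_aux _ _ hg) (integrable_const _)] at this
  simpa using this

end helpers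

/-- For a weakly hyperbolic IFS on a compact metric space, the iterates of a
Dirac measure under the transfer operator converge weakly to an invariant
probability measure. -/
theorem stmt_7 {Λ X : Type*} [MetricSpace Λ] [CompactSpace Λ]
    [MeasurableSpace Λ] [BorelSpace Λ]
    [MetricSpace X] [CompactSpace X] [MeasurableSpace X] [BorelSpace X]
    (w : Λ → X → X) (hw : Continuous fun p : Λ × X => w p.1 p.2)
    (hyp : ∀ σ : ℕ → Λ,
      Tendsto (fun n => diam (Set.range (seqComp w σ n))) atTop (𝓝 0))
    (p : Measure Λ) [IsProbabilityMeasure p]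
    (T : ProbabilityMeasure X → ProbabilityMeasure X)
    (hT : ∀ (μ : ProbabilityMeasure X) (B : Set X), MeasurableSet B →
      (T μ : Measure X) B = ∫⁻ l, (μ : Measure X) ((fun x => w l x) ⁻¹' B) ∂p)
    (a : X) :
    ∃ ν : ProbabilityMeasure X,
      Tendsto (fun n => T^[n] ⟨Measure.dirac a, inferInstance⟩) atTop (𝓝 ν) ∧
        T ν = ν := by
  set μ₀ : ProbabilityMeasure X := ⟨Measure.dirac a, inferInstance⟩ with hμ₀
  have hcauchy : ∀ f : X → ℝ, Continuous f →
      CauchySeq (fun n => ∫ x, f x ∂(T^[n] μ₀ : Measure X)) := by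
    intro f hf
    rw [Metric.cauchySeq_iff]
    intro ε hε
    obtain ⟨δ, hδ, hfδ⟩ := Metric.uniformContinuous_iff.1
      (CompactSpace.uniformContinuous_of_continuous hf) (ε / 3) (by positivity)
    obtain ⟨N, hN⟩ := unif_aux w hw hyp hδ
    set g := (dualOp w p)^[N] f with hg
    have hgc : Continuous g := dualOp_iter_cont w hw p f hf N
    have hosc : ∀ x, |g x - g a| ≤ ε / 3 := fun x =>
      dualOp_osc w hw p f hf _ N x a fun σ => (hfδ (hN σ x a)).le
    have key : ∀ m ≥ N, |∫ x, f x ∂(T^[m] μ₀ : Measure X) - g a| ≤ ε / 3 := by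
      intro m hm
      obtain ⟨k, rfl⟩ := Nat.exists_eq_add_of_le hm
      rw [Function.iterate_add_apply, T_iter_integral w hw p T hT N _ f hf]
      exact osc_integral g hgc _ a hosc _
    refine ⟨N, fun m hm n hn => ?_⟩
    have h1 := abs_le.1 (key m hm)
    have h2 := abs_le.1 (key n hn)
    rw [Real.dist_eq, abs_lt]
    constructor <;> linarith [h1.1, h1.2, h2.1, h2.2]
  obtain ⟨ν, hν⟩ := exists_clusterPt_of_compactSpace (Filter.map (fun n => T^[n] μ₀) atTop)
  have hlim : Tendsto (fun n => T^[n] μ₀) atTop (𝓝 ν) := by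
    rw [ProbabilityMeasure.tendsto_iff_forall_integral_tendsto]
    intro f
    refine le_nhds_of_cauchy_adhp (hcauchy f f.continuous) ?_
    have hc : Continuous fun μ : ProbabilityMeasure X => ∫ x, f x ∂(μ : Measure X) :=
      continuous_iff_continuousAt.2 fun μ =>
        ProbabilityMeasure.tendsto_iff_forall_integral_tendsto.1 tendsto_id f
    exact MapClusterPt.continuousAt_comp hc.continuousAt hν
  refine ⟨ν, hlim, ?_⟩
  have h1 : Tendsto (fun n => T (T^[n] μ₀)) atTop (𝓝 (T ν)) := by
    rw [ProbabilityMeasure.tendsto_iff_forall_integral_tendsto] at hlim ⊢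
    intro f
    simp only [T_integral w hw p T hT _ f f.continuous]
    exact hlim (BoundedContinuousFunction.mkOfCompact
      ⟨dualOp w p f, dualOp_cont w hw p f f.continuous⟩)
  have h2 : Tendsto (fun n => T (T^[n] μ₀)) atTop (𝓝 ν) := by
    simpa only [Function.iterate_succ_apply'] using (tendsto_add_atTop_iff_nat 1).2 hlim
  exact tendsto_nhds_unique h1 h2
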